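/- There is an absolute constant C with the following property. Let (u,P,d) be a smooth solution of the nematic liquid crystal system on ℝ²×(0,T) satisfying the Schwartz decay assumption, and let ω = ∂_1 u_2 − ∂_2 u_1. Then for every t ∈ (0,T), (d/dt) ½‖ω(t,·)‖_{L²}² + ‖∇ω(t,·)‖_{L²}² ≤ C ‖∇d(t,·)‖_{L^∞} ‖Δd(t,·)‖_{L²} ‖∇ω(t,·)‖_{L²}. -/

import Mathlib

open MeasureTheory Real

noncomputable section

/-- `pd i f x` is the `i`-th partial derivative `∂ᵢ f (x)` of `f : ℝⁿ → ℝ`. -/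
def pd {n : ℕ} (i : Fin n) (f : EuclideanSpace ℝ (Fin n) → ℝ)
    (x : EuclideanSpace ℝ (Fin n)) : ℝ :=
  fderiv ℝ f x (EuclideanSpace.single i 1)

/-- `lap f x` is the Laplacian `Δf(x) = Σᵢ ∂ᵢ∂ᵢ f (x)`. -/
def lap {n : ℕ} (f : EuclideanSpace ℝ (Fin n) → ℝ)
    (x : EuclideanSpace ℝ (Fin n)) : ℝ :=
  ∑ i, pd i (fun y => pd i f y) x
/-- The simplified Ericksen–Leslie nematic liquid crystal system on ℝⁿ × (0,T). -/
structure IsNLC (n : ℕ) (T : ℝ)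
    (u : ℝ → EuclideanSpace ℝ (Fin n) → EuclideanSpace ℝ (Fin n))
    (P : ℝ → EuclideanSpace ℝ (Fin n) → ℝ)
    (d : ℝ → EuclideanSpace ℝ (Fin n) → EuclideanSpace ℝ (Fin 3)) : Prop where
  smooth_u : ContDiff ℝ (⊤ : ℕ∞) (Function.uncurry u)
  smooth_P : ContDiff ℝ (⊤ : ℕ∞) (Function.uncurry P)
  smooth_d : ContDiff ℝ (⊤ : ℕ∞) (Function.uncurry d)
  unit : ∀ t ∈ Set.Ioo (0:ℝ) T, ∀ x, ‖d t x‖ = 1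
  momentum : ∀ t ∈ Set.Ioo (0:ℝ) T, ∀ x, ∀ j : Fin n,
    deriv (fun s => u s x j) t - lap (fun y => u t y j) x
      + (∑ i, u t x i * pd i (fun y => u t y j) x) + pd j (P t) x
      = - ∑ i, pd i (fun y => ∑ k : Fin 3,
          pd i (fun z => d t z k) y * pd j (fun z => d t z k) y) x
  director : ∀ t ∈ Set.Ioo (0:ℝ) T, ∀ x, ∀ k : Fin 3,
    deriv (fun s => d s x k) t + ∑ i, u t x i * pd i (fun y => d t y k) x
      = lap (fun y => d t y k) x
        + (∑ i, ∑ k' : Fin 3, (pd i (fun y => d t y k') x) ^ 2) * d t x k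
  divfree : ∀ t ∈ Set.Ioo (0:ℝ) T, ∀ x, ∑ i, pd i (fun y => u t y i) x = 0

/-- A family of functions, Schwartz in x with seminorms locally uniformly bounded in t ∈ (0,T). -/
def SchwartzFamily {n : ℕ} (T : ℝ) (f : ℝ → EuclideanSpace ℝ (Fin n) → ℝ) : Prop :=
  ∀ t₀ ∈ Set.Ioo (0:ℝ) T, ∀ k l : ℕ, ∃ ε > 0, ∃ C : ℝ,
    ∀ t ∈ Set.Ioo (0:ℝ) T, |t - t₀| < ε →
      ∀ x, ‖x‖ ^ k * ‖iteratedFDeriv ℝ l (f t) x‖ ≤ C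

/-- Schwartz decay assumption: u, ∂ₜu, ∇d, ∂ₜ∇d are Schwartz in x, locally uniformly in t. -/
def SchwartzDecay (n : ℕ) (T : ℝ)
    (u : ℝ → EuclideanSpace ℝ (Fin n) → EuclideanSpace ℝ (Fin n))
    (d : ℝ → EuclideanSpace ℝ (Fin n) → EuclideanSpace ℝ (Fin 3)) : Prop :=
  (∀ j : Fin n, SchwartzFamily T fun t x => u t x j) ∧
  (∀ j : Fin n, SchwartzFamily T fun t x => deriv (fun s => u s x j) t) ∧
  (∀ (i : Fin n) (k : Fin 3), SchwartzFamily T fun t x => pd i (fun y => d t y k) x) ∧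
  (∀ (i : Fin n) (k : Fin 3),
    SchwartzFamily T fun t x => deriv (fun s => pd i (fun y => d s y k) x) t)

/-- ‖∇d‖_{L^∞}: essential supremum of |∇d| for d : ℝⁿ → ℝ³. -/
def gradLinf {n : ℕ} (d : EuclideanSpace ℝ (Fin n) → EuclideanSpace ℝ (Fin 3)) : ℝ :=
  essSup (fun x => Real.sqrt (∑ i, ∑ k : Fin 3, (pd i (fun z => d z k) x) ^ 2)) volume

/-- ‖Δd‖_{L²} for d : ℝⁿ → ℝ³. -/
def lapL2 {n : ℕ} (d : EuclideanSpace ℝ (Fin n) → EuclideanSpace ℝ (Fin 3)) : ℝ :=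
  Real.sqrt (∑ k : Fin 3, ∫ x, (lap (fun z => d z k) x) ^ 2)

/-- The scalar vorticity ω = ∂₁u₂ − ∂₂u₁ in 2D. -/
def vort2 (u : EuclideanSpace ℝ (Fin 2) → EuclideanSpace ℝ (Fin 2))
    (x : EuclideanSpace ℝ (Fin 2)) : ℝ :=
  pd 0 (fun y => u y 1) x - pd 1 (fun y => u y 0) x

/-- ‖∇ω‖_{L²} for the 2D scalar vorticity. -/
def gradVort2L2 (u : EuclideanSpace ℝ (Fin 2) → EuclideanSpace ℝ (Fin 2)) : ℝ :=
  Real.sqrt (∑ i, ∫ x, (pd i (vort2 u) x) ^ 2)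

/-! Since `∇·(∇d⊙∇d) = Δd·∇d + ∇(½|∇d|²)`, the curl removes both the pressure and the gradient part
of the elastic stress: the vorticity satisfies `∂ₜω + (u·∇)ω = Δω − curl (Δd·∇d)`. Tested against
`ω`, the transport term vanishes by incompressibility, and integrating the curl by parts pairs
`Δd·∇d` with the rotated gradient of `ω`. Pointwise `|Δd·∇d| ≤ |∇d||Δd|`, so the Cauchy–Schwarz
inequality gives the estimate with constant `1`. -/

open scoped ContDiff SchwartzMap

section SecondDerivative

variable {E F : Type*} [NormedAddCommGroup E] [NormedSpace ℝ E] [NormedAddCommGroup F]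
  [NormedSpace ℝ F]

lemma fderiv_fderiv_apply_comm {f : E → F} {x : E} (hf : ContDiffAt ℝ 2 f x) (v w : E) :
    fderiv ℝ (fun y => fderiv ℝ f y v) x w = fderiv ℝ (fun y => fderiv ℝ f y w) x v := by
  have hf' : DifferentiableAt ℝ (fderiv ℝ f) x :=
    (hf.fderiv_right (m := 1) (by norm_num)).differentiableAt one_ne_zero
  have hsymm : IsSymmSndFDerivAt ℝ f x := hf.isSymmSndFDerivAt (by simp)
  simpa [fderiv_clm_apply hf' (differentiableAt_const _)] using hsymm.eq w v

end SecondDerivative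

section PartialDerivative

variable {n : ℕ} {f g : EuclideanSpace ℝ (Fin n) → ℝ} {x : EuclideanSpace ℝ (Fin n)}

lemma pd_add (hf : DifferentiableAt ℝ f x) (hg : DifferentiableAt ℝ g x) (i : Fin n) :
    pd i (fun y => f y + g y) x = pd i f x + pd i g x := by
  simp [pd, fderiv_fun_add hf hg]

lemma pd_sub (hf : DifferentiableAt ℝ f x) (hg : DifferentiableAt ℝ g x) (i : Fin n) :
    pd i (fun y => f y - g y) x = pd i f x - pd i g x := by
  simp [pd, fderiv_fun_sub hf hg]

lemma pd_mul (hf : DifferentiableAt ℝ f x) (hg : DifferentiableAt ℝ g x) (i : Fin n) :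
    pd i (fun y => f y * g y) x = pd i f x * g x + f x * pd i g x := by
  simp only [pd, fderiv_fun_mul hf hg, add_apply, smul_apply, smul_eq_mul]
  ring

lemma pd_const_mul (hf : DifferentiableAt ℝ f x) (c : ℝ) (i : Fin n) :
    pd i (fun y => c * f y) x = c * pd i f x := by
  simp [pd, fderiv_const_mul hf]

lemma pd_sum {ι : Type*} {s : Finset ι} {f : ι → EuclideanSpace ℝ (Fin n) → ℝ}
    (hf : ∀ k ∈ s, DifferentiableAt ℝ (f k) x) (i : Fin n) :
    pd i (fun y => ∑ k ∈ s, f k y) x = ∑ k ∈ s, pd i (f k) x := by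
  simp [pd, fderiv_fun_sum hf]

lemma pd_comm (hf : ContDiff ℝ 2 f) (i j : Fin n) (x : EuclideanSpace ℝ (Fin n)) :
    pd i (pd j f) x = pd j (pd i f) x :=
  fderiv_fderiv_apply_comm hf.contDiffAt _ _

lemma contDiff_pd {k m : ℕ∞ω} (hf : ContDiff ℝ m f) (hkm : k + 1 ≤ m) (i : Fin n) :
    ContDiff ℝ k (pd i f) :=
  (hf.fderiv_right hkm).clm_apply contDiff_const

lemma differentiable_pd (hf : ContDiff ℝ 2 f) (i : Fin n) : Differentiable ℝ (pd i f) :=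
  (contDiff_pd hf one_add_one_eq_two.le i).differentiable one_ne_zero

lemma contDiff_lap {k m : ℕ∞ω} (hf : ContDiff ℝ m f) (hkm : k + 2 ≤ m) :
    ContDiff ℝ k (lap f) := by
  have hkm' : k + 1 + 1 ≤ m := by rwa [add_assoc, one_add_one_eq_two]
  exact ContDiff.sum fun i _ => contDiff_pd (contDiff_pd hf hkm' i) le_rfl i

lemma lap_sub (hf : ContDiff ℝ 2 f) (hg : ContDiff ℝ 2 g) (x : EuclideanSpace ℝ (Fin n)) :
    lap (fun y => f y - g y) x = lap f x - lap g x := by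
  have hpd (i : Fin n) : pd i (fun y => f y - g y) = fun y => pd i f y - pd i g y :=
    funext fun y =>
      pd_sub (hf.differentiable two_ne_zero y) (hg.differentiable two_ne_zero y) i
  simp only [lap, hpd, pd_sub (differentiable_pd hf _ x) (differentiable_pd hg _ x),
    Finset.sum_sub_distrib]

lemma pd_lap (hf : ContDiff ℝ 3 f) (i : Fin n) (x : EuclideanSpace ℝ (Fin n)) :
    pd i (lap f) x = lap (pd i f) x := by
  have hf₂ (j : Fin n) : ContDiff ℝ 2 (pd j f) := contDiff_pd hf (by norm_num) j
  calc pd i (lap f) x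
      = ∑ j, pd i (pd j (pd j f)) x := pd_sum (fun j _ => differentiable_pd (hf₂ j) j x) i
    _ = ∑ j, pd j (pd i (pd j f)) x := by simp only [pd_comm (hf₂ _) i]
    _ = lap (pd i f) x := by
      have hcomm (j : Fin n) : pd i (pd j f) = pd j (pd i f) :=
        funext (pd_comm (hf.of_le (by norm_num)) i j)
      simp only [hcomm, lap]

end PartialDerivative

section VectorCalculus

variable {n : ℕ} {ι : Type*} [Fintype ι]

/-- The divergence `∇·u = ∑ᵢ ∂ᵢuᵢ` of a vector field given by its components. -/
def divergence (u : Fin n → EuclideanSpace ℝ (Fin n) → ℝ) (x : EuclideanSpace ℝ (Fin n)) : ℝ :=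
  ∑ i, pd i (u i) x

/-- The derivative `(u·∇)f = ∑ᵢ uᵢ ∂ᵢf` of `f` along the vector field with components `u`. -/
def advect (u : Fin n → EuclideanSpace ℝ (Fin n) → ℝ) (f : EuclideanSpace ℝ (Fin n) → ℝ)
    (x : EuclideanSpace ℝ (Fin n)) : ℝ :=
  ∑ i, u i x * pd i f x

/-- The scalar curl `∂₁F₂ − ∂₂F₁` of a planar vector field given by its components, so that
`vort2 u` is `scalarCurl fun j y => u y j`. -/
def scalarCurl (F : Fin 2 → EuclideanSpace ℝ (Fin 2) → ℝ) (x : EuclideanSpace ℝ (Fin 2)) : ℝ :=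
  pd 0 (F 1) x - pd 1 (F 0) x

/-- The squared gradient `|∇d|² = ∑ᵢ ∑ₖ (∂ᵢdₖ)²` of a map given by its components. -/
def gradSq (d : ι → EuclideanSpace ℝ (Fin n) → ℝ) (x : EuclideanSpace ℝ (Fin n)) : ℝ :=
  ∑ i, ∑ k, (pd i (d k) x) ^ 2

/-- The vector field `Δd·∇d` with `j`-th component `∑ₖ Δdₖ ∂ⱼdₖ`, which is the force exerted by the
director field on the fluid, up to sign and a gradient. -/
def directorForce (d : ι → EuclideanSpace ℝ (Fin n) → ℝ) (j : Fin n)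
    (x : EuclideanSpace ℝ (Fin n)) : ℝ :=
  ∑ k, lap (d k) x * pd j (d k) x

lemma contDiff_advect {u : Fin n → EuclideanSpace ℝ (Fin n) → ℝ}
    {f : EuclideanSpace ℝ (Fin n) → ℝ} {k m : ℕ∞ω} (hu : ∀ i, ContDiff ℝ k (u i))
    (hf : ContDiff ℝ m f) (hkm : k + 1 ≤ m) : ContDiff ℝ k (advect u f) :=
  ContDiff.sum fun i _ => (hu i).mul (contDiff_pd hf hkm i)

lemma contDiff_gradSq {d : ι → EuclideanSpace ℝ (Fin n) → ℝ} {k m : ℕ∞ω}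
    (hd : ∀ l, ContDiff ℝ m (d l)) (hkm : k + 1 ≤ m) : ContDiff ℝ k (gradSq d) :=
  ContDiff.sum fun i _ => ContDiff.sum fun l _ => (contDiff_pd (hd l) hkm i).pow 2

lemma contDiff_directorForce {d : ι → EuclideanSpace ℝ (Fin n) → ℝ} {k m : ℕ∞ω}
    (hd : ∀ l, ContDiff ℝ m (d l)) (hkm : k + 2 ≤ m) (j : Fin n) :
    ContDiff ℝ k (directorForce d j) := by
  have hkm' : k + 1 ≤ m := (add_le_add_right one_le_two k).trans hkm
  exact ContDiff.sum fun l _ => (contDiff_lap (hd l) hkm).mul (contDiff_pd (hd l) hkm' j)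

lemma pd_half_gradSq {d : ι → EuclideanSpace ℝ (Fin n) → ℝ} (hd : ∀ k, ContDiff ℝ 2 (d k))
    (j : Fin n) (x : EuclideanSpace ℝ (Fin n)) :
    pd j (fun y => 1 / 2 * gradSq d y) x = ∑ i, ∑ k, pd i (d k) x * pd j (pd i (d k)) x := by
  have hpd (i : Fin n) (k : ι) : DifferentiableAt ℝ (pd i (d k)) x := differentiable_pd (hd k) i x
  have hgrad : DifferentiableAt ℝ (gradSq d) x :=
    (contDiff_gradSq hd one_add_one_eq_two.le).differentiable one_ne_zero x
  have hsq : gradSq d = fun y => ∑ i, ∑ k, pd i (d k) y * pd i (d k) y := by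
    ext y
    simp only [gradSq, pow_two]
  rw [pd_const_mul hgrad, hsq,
    pd_sum fun i _ => .fun_sum fun k _ => (hpd i k).fun_mul (hpd i k), Finset.mul_sum]
  refine Finset.sum_congr rfl fun i _ => ?_
  rw [pd_sum fun k _ => (hpd i k).fun_mul (hpd i k), Finset.mul_sum]
  refine Finset.sum_congr rfl fun k _ => ?_
  rw [pd_mul (hpd i k) (hpd i k)]
  ring

lemma sum_pd_stress_eq {d : ι → EuclideanSpace ℝ (Fin n) → ℝ} (hd : ∀ k, ContDiff ℝ 2 (d k))
    (j : Fin n) (x : EuclideanSpace ℝ (Fin n)) :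
    ∑ i, pd i (fun y => ∑ k, pd i (d k) y * pd j (d k) y) x
      = directorForce d j x + pd j (fun y => 1 / 2 * gradSq d y) x := by
  have hpd (i : Fin n) (k : ι) : DifferentiableAt ℝ (pd i (d k)) x := differentiable_pd (hd k) i x
  have hforce : directorForce d j x = ∑ i, ∑ k, pd i (pd i (d k)) x * pd j (d k) x := by
    rw [Finset.sum_comm]
    simp only [directorForce, lap, Finset.sum_mul]
  rw [hforce, pd_half_gradSq hd, ← Finset.sum_add_distrib]
  refine Finset.sum_congr rfl fun i _ => ?_
  rw [pd_sum fun k _ => (hpd i k).fun_mul (hpd j k), ← Finset.sum_add_distrib]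
  simp only [pd_mul (hpd i _) (hpd j _), pd_comm (hd _) i j]

variable {u F G : Fin 2 → EuclideanSpace ℝ (Fin 2) → ℝ}

lemma scalarCurl_sub (hF : ∀ j, Differentiable ℝ (F j)) (hG : ∀ j, Differentiable ℝ (G j))
    (x : EuclideanSpace ℝ (Fin 2)) :
    scalarCurl (fun j y => F j y - G j y) x = scalarCurl F x - scalarCurl G x := by
  simp only [scalarCurl, pd_sub (hF _ x) (hG _ x)]
  ring

lemma scalarCurl_pd {f : EuclideanSpace ℝ (Fin 2) → ℝ} (hf : ContDiff ℝ 2 f)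
    (x : EuclideanSpace ℝ (Fin 2)) : scalarCurl (fun j => pd j f) x = 0 :=
  sub_eq_zero.2 (pd_comm hf 0 1 x)

lemma scalarCurl_lap (hu : ∀ j, ContDiff ℝ 3 (u j)) (x : EuclideanSpace ℝ (Fin 2)) :
    scalarCurl (fun j => lap (u j)) x = lap (scalarCurl u) x := by
  simp only [scalarCurl, pd_lap (hu _)]
  exact (lap_sub (contDiff_pd (hu 1) (by norm_num) 0) (contDiff_pd (hu 0) (by norm_num) 1) x).symm

lemma scalarCurl_advect (hu : ∀ j, ContDiff ℝ 2 (u j)) (x : EuclideanSpace ℝ (Fin 2)) :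
    scalarCurl (fun j => advect u (u j)) x
      = advect u (scalarCurl u) x + divergence u x * scalarCurl u x := by
  have hu₁ (j : Fin 2) : DifferentiableAt ℝ (u j) x := (hu j).differentiable two_ne_zero x
  have hpd (i j : Fin 2) : DifferentiableAt ℝ (pd i (u j)) x := differentiable_pd (hu j) i x
  have hadvect (i j : Fin 2) : pd i (advect u (u j)) x
      = ∑ l, (pd i (u l) x * pd l (u j) x + u l x * pd i (pd l (u j)) x) :=
    (pd_sum (fun l _ => (hu₁ l).fun_mul (hpd l j)) i).trans
      (Finset.sum_congr rfl fun l _ => pd_mul (hu₁ l) (hpd l j) i)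
  have hcurl (i : Fin 2) : pd i (scalarCurl u) x = pd i (pd 0 (u 1)) x - pd i (pd 1 (u 0)) x :=
    pd_sub (hpd 0 1) (hpd 1 0) i
  simp only [scalarCurl, hadvect, advect, hcurl, divergence, Fin.sum_univ_two]
  rw [pd_comm (hu 1) 1 0, pd_comm (hu 0) 1 0]
  ring

/-- Up to a gradient, which the curl annihilates, the elastic stress `∇·(∇d⊙∇d)` is `Δd·∇d`. -/
lemma vorticity_equation {P : EuclideanSpace ℝ (Fin 2) → ℝ}
    {v : Fin 2 → EuclideanSpace ℝ (Fin 2) → ℝ} {d : ι → EuclideanSpace ℝ (Fin 2) → ℝ}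
    (hu : ∀ j, ContDiff ℝ 3 (u j)) (hP : ContDiff ℝ 2 P) (hd : ∀ k, ContDiff ℝ 3 (d k))
    (momentum : ∀ j x, v j x - lap (u j) x + advect u (u j) x + pd j P x
      = -∑ i, pd i (fun y => ∑ k, pd i (d k) y * pd j (d k) y) x)
    (divfree : ∀ x, divergence u x = 0) (x : EuclideanSpace ℝ (Fin 2)) :
    scalarCurl v x = lap (scalarCurl u) x - advect u (scalarCurl u) x
      - scalarCurl (directorForce d) x := by
  have hd₂ (k : ι) : ContDiff ℝ 2 (d k) := (hd k).of_le (by norm_num)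
  have hgradSq : ContDiff ℝ 2 (fun y => 1 / 2 * gradSq d y) :=
    contDiff_const.mul (contDiff_gradSq hd (by norm_num))
  have hp : ContDiff ℝ 2 (fun y => P y + 1 / 2 * gradSq d y) := hP.add hgradSq
  have hv : v = fun j y => lap (u j) y - advect u (u j) y - directorForce d j y
      - pd j (fun z => P z + 1 / 2 * gradSq d z) y := by
    ext j y
    have hmom := momentum j y
    rw [sum_pd_stress_eq hd₂] at hmom
    rw [pd_add (hP.differentiable two_ne_zero y) (hgradSq.differentiable two_ne_zero y)]
    linear_combination hmom
  have hlap (j : Fin 2) : Differentiable ℝ (lap (u j)) :=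
    (contDiff_lap (k := 1) (hu j) (by norm_num)).differentiable one_ne_zero
  have hadvect (j : Fin 2) : Differentiable ℝ (advect u (u j)) :=
    (contDiff_advect (k := 2) (fun i => (hu i).of_le (by norm_num)) (hu j)
      (by norm_num)).differentiable two_ne_zero
  have hforce (j : Fin 2) : Differentiable ℝ (directorForce d j) :=
    (contDiff_directorForce (k := 1) hd (by norm_num) j).differentiable one_ne_zero
  rw [hv, scalarCurl_sub (fun j => ((hlap j).fun_sub (hadvect j)).fun_sub (hforce j))
      (fun j => differentiable_pd hp j),
    scalarCurl_sub (fun j => (hlap j).fun_sub (hadvect j)) hforce, scalarCurl_sub hlap hadvect,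
    scalarCurl_pd hp, scalarCurl_lap hu, scalarCurl_advect (fun j => (hu j).of_le (by norm_num)),
    divfree]
  ring

end VectorCalculus

section TimeDependent

variable {n : ℕ} {f : ℝ → EuclideanSpace ℝ (Fin n) → ℝ}

lemma hasDerivAt_time {t : ℝ} {x : EuclideanSpace ℝ (Fin n)}
    (hf : DifferentiableAt ℝ (Function.uncurry f) (t, x)) :
    HasDerivAt (fun s => f s x) (fderiv ℝ (Function.uncurry f) (t, x) (1, 0)) t := by
  have hline : HasDerivAt (fun s : ℝ => (s, x)) ((1 : ℝ), (0 : EuclideanSpace ℝ (Fin n))) t :=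
    (hasDerivAt_id t).prodMk (hasDerivAt_const t x)
  exact HasFDerivAt.comp_hasDerivAt (f := fun s => (s, x)) t hf.hasFDerivAt hline

lemma pd_eq_fderiv_uncurry {t : ℝ} {x : EuclideanSpace ℝ (Fin n)}
    (hf : DifferentiableAt ℝ (Function.uncurry f) (t, x)) (i : Fin n) :
    pd i (f t) x = fderiv ℝ (Function.uncurry f) (t, x) (0, EuclideanSpace.single i 1) := by
  have hft : HasFDerivAt (f t) _ x :=
    hf.hasFDerivAt.comp x ((hasFDerivAt_const t x).prodMk (hasFDerivAt_id x))
  simp [pd, hft.fderiv]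

lemma contDiff_slice {m : ℕ∞ω} (hf : ContDiff ℝ m (Function.uncurry f)) (t : ℝ) :
    ContDiff ℝ m (f t) :=
  hf.comp (contDiff_prodMk_right t)

lemma contDiff_uncurry_pd (hf : ContDiff ℝ ∞ (Function.uncurry f)) (i : Fin n) :
    ContDiff ℝ ∞ (Function.uncurry fun t => pd i (f t)) := by
  have hpd : (Function.uncurry fun t => pd i (f t))
      = fun p => fderiv ℝ (Function.uncurry f) p (0, EuclideanSpace.single i 1) :=
    funext fun p => pd_eq_fderiv_uncurry (hf.differentiable (by simp) p) i
  rw [hpd]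
  exact (hf.fderiv_right (by simp)).clm_apply contDiff_const

lemma contDiff_uncurry_deriv (hf : ContDiff ℝ ∞ (Function.uncurry f)) :
    ContDiff ℝ ∞ (Function.uncurry fun t x => deriv (fun s => f s x) t) := by
  have hderiv : (Function.uncurry fun t x => deriv (fun s => f s x) t)
      = fun p => fderiv ℝ (Function.uncurry f) p (1, 0) :=
    funext fun p => (hasDerivAt_time (hf.differentiable (by simp) p)).deriv
  rw [hderiv]
  exact (hf.fderiv_right (by simp)).clm_apply contDiff_const

lemma deriv_pd_comm (hf : ContDiff ℝ 2 (Function.uncurry f)) (i : Fin n) (t : ℝ)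
    (x : EuclideanSpace ℝ (Fin n)) :
    deriv (fun s => pd i (f s) x) t = pd i (fun y => deriv (fun s => f s y) t) x := by
  have hdiff : Differentiable ℝ (Function.uncurry f) := hf.differentiable two_ne_zero
  have hfderiv (v : ℝ × EuclideanSpace ℝ (Fin n)) :
      Differentiable ℝ (fun p => fderiv ℝ (Function.uncurry f) p v) :=
    ((hf.fderiv_right (m := 1) one_add_one_eq_two.le).clm_apply contDiff_const).differentiable
      one_ne_zero
  have hpd : (fun s => pd i (f s) x)
      = fun s => fderiv ℝ (Function.uncurry f) (s, x) (0, EuclideanSpace.single i 1) :=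
    funext fun s => pd_eq_fderiv_uncurry (hdiff _) i
  have hderiv : (fun y => deriv (fun s => f s y) t)
      = fun y => fderiv ℝ (Function.uncurry f) (t, y) (1, 0) :=
    funext fun y => (hasDerivAt_time (hdiff _)).deriv
  rw [hpd, hderiv]
  calc deriv (fun s => fderiv ℝ (Function.uncurry f) (s, x) (0, EuclideanSpace.single i 1)) t
      = fderiv ℝ (fun p => fderiv ℝ (Function.uncurry f) p (0, EuclideanSpace.single i 1))
          (t, x) (1, 0) :=
        (hasDerivAt_time
          (f := fun s y => fderiv ℝ (Function.uncurry f) (s, y) (0, EuclideanSpace.single i 1))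
          (hfderiv _ _)).deriv
    _ = fderiv ℝ (fun p => fderiv ℝ (Function.uncurry f) p (1, 0)) (t, x)
          (0, EuclideanSpace.single i 1) := fderiv_fderiv_apply_comm hf.contDiffAt _ _
    _ = pd i (fun y => fderiv ℝ (Function.uncurry f) (t, y) (1, 0)) x :=
        (pd_eq_fderiv_uncurry (f := fun s y => fderiv ℝ (Function.uncurry f) (s, y) (1, 0))
          (hfderiv _ _) i).symm

end TimeDependent

section Schwartz

variable {E : Type*} [NormedAddCommGroup E] [NormedSpace ℝ E] {f g : E → ℝ}

/-- The predicate form of `SchwartzMap`: `f` is a real-valued Schwartz function. -/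
def IsSchwartz (f : E → ℝ) : Prop :=
  ∃ F : 𝓢(E, ℝ), ⇑F = f

namespace IsSchwartz

lemma sub (hf : IsSchwartz f) (hg : IsSchwartz g) : IsSchwartz fun x => f x - g x := by
  obtain ⟨F, rfl⟩ := hf
  obtain ⟨G, rfl⟩ := hg
  exact ⟨F - G, rfl⟩

lemma mul (hf : IsSchwartz f) (hg : IsSchwartz g) : IsSchwartz fun x => f x * g x := by
  obtain ⟨F, rfl⟩ := hf
  obtain ⟨G, rfl⟩ := hg
  exact ⟨SchwartzMap.pairing (ContinuousLinearMap.mul ℝ ℝ) F G, rfl⟩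

lemma sq (hf : IsSchwartz f) : IsSchwartz fun x => f x ^ 2 := by
  simpa only [pow_two] using hf.mul hf

lemma sum {ι : Type*} {s : Finset ι} {f : ι → E → ℝ} (hf : ∀ i, IsSchwartz (f i)) :
    IsSchwartz fun x => ∑ i ∈ s, f i x := by
  choose F hF using hf
  exact ⟨∑ i ∈ s, F i, by ext x; simp [hF]⟩

lemma contDiff (hf : IsSchwartz f) : ContDiff ℝ ∞ f := by
  obtain ⟨F, rfl⟩ := hf
  exact F.smooth'

lemma differentiable (hf : IsSchwartz f) : Differentiable ℝ f :=
  hf.contDiff.differentiable (by simp)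

lemma exists_abs_le (hf : IsSchwartz f) : ∃ C, ∀ x, |f x| ≤ C := by
  obtain ⟨F, rfl⟩ := hf
  exact ⟨SchwartzMap.seminorm ℝ 0 0 F, F.norm_le_seminorm ℝ⟩

lemma integrable [MeasurableSpace E] [BorelSpace E] [SecondCountableTopology E] {μ : Measure E}
    [μ.HasTemperateGrowth] (hf : IsSchwartz f) : Integrable f μ := by
  obtain ⟨F, rfl⟩ := hf
  exact F.integrable

variable {n : ℕ} {ι : Type*} [Fintype ι] {f g : EuclideanSpace ℝ (Fin n) → ℝ}

protected lemma pd (hf : IsSchwartz f) (i : Fin n) : IsSchwartz (pd i f) := by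
  obtain ⟨F, rfl⟩ := hf
  refine ⟨LineDeriv.lineDerivOp (EuclideanSpace.single i (1 : ℝ)) F, funext fun x => ?_⟩
  exact SchwartzMap.lineDerivOp_apply_eq_fderiv _ _ _

protected lemma advect {u : Fin n → EuclideanSpace ℝ (Fin n) → ℝ} (hu : ∀ i, IsSchwartz (u i))
    (hf : IsSchwartz f) : IsSchwartz (advect u f) :=
  sum fun i => (hu i).mul (hf.pd i)

protected lemma scalarCurl {F : Fin 2 → EuclideanSpace ℝ (Fin 2) → ℝ}
    (hF : ∀ j, IsSchwartz (F j)) : IsSchwartz (scalarCurl F) :=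
  ((hF 1).pd 0).sub ((hF 0).pd 1)

lemma lap_of_pd (hf : ∀ i, IsSchwartz (pd i f)) : IsSchwartz (lap f) :=
  sum fun i => (hf i).pd i

protected lemma gradSq {d : ι → EuclideanSpace ℝ (Fin n) → ℝ}
    (hd : ∀ i k, IsSchwartz (pd i (d k))) : IsSchwartz (gradSq d) :=
  sum fun i => sum fun k => (hd i k).sq

protected lemma directorForce {d : ι → EuclideanSpace ℝ (Fin n) → ℝ}
    (hd : ∀ i k, IsSchwartz (pd i (d k))) (j : Fin n) : IsSchwartz (directorForce d j) :=
  sum fun k => (lap_of_pd fun i => hd i k).mul (hd j k)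

lemma integral_mul_pd (hf : IsSchwartz f) (hg : IsSchwartz g) (i : Fin n) :
    ∫ x, f x * pd i g x = -∫ x, pd i f x * g x := by
  obtain ⟨F, rfl⟩ := hf
  obtain ⟨G, rfl⟩ := hg
  simpa only [SchwartzMap.lineDerivOp_apply_eq_fderiv, pd] using
    F.integral_mul_lineDerivOp_right_eq_neg_left (μ := volume) G (EuclideanSpace.single i 1)

lemma integral_mul_lap_self (hf : IsSchwartz f) :
    ∫ x, f x * lap f x = -∑ i, ∫ x, pd i f x ^ 2 := by
  simp only [lap, Finset.mul_sum]
  rw [integral_finsetSum _ fun i _ => (hf.mul ((hf.pd i).pd i)).integrable,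
    ← Finset.sum_neg_distrib]
  simp only [hf.integral_mul_pd (hf.pd _), pow_two]

lemma integral_mul_advect_self {u : Fin n → EuclideanSpace ℝ (Fin n) → ℝ} (hf : IsSchwartz f)
    (hu : ∀ i, IsSchwartz (u i)) (divfree : ∀ x, divergence u x = 0) :
    ∫ x, f x * advect u f x = 0 := by
  have hpointwise (x : EuclideanSpace ℝ (Fin n)) :
      ∑ i, pd i (fun y => u i y * f y) x * f x = f x * advect u f x := by
    simp only [pd_mul ((hu _).differentiable x) (hf.differentiable x), add_mul,
      Finset.sum_add_distrib, ← Finset.sum_mul]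
    rw [show ∑ i, pd i (u i) x = 0 from divfree x, advect]
    ring
  have hanti : ∫ x, f x * advect u f x = -∫ x, f x * advect u f x := by
    calc ∫ x, f x * advect u f x
        = ∑ i, ∫ x, u i x * f x * pd i f x := by
          rw [← integral_finsetSum _ fun i _ => (((hu i).mul hf).mul (hf.pd i)).integrable]
          refine integral_congr_ae (.of_forall fun x => ?_)
          simp only [advect, Finset.mul_sum]
          exact Finset.sum_congr rfl fun i _ => by ring
      _ = -∑ i, ∫ x, pd i (fun y => u i y * f y) x * f x := by
          simp only [((hu _).mul hf).integral_mul_pd hf, Finset.sum_neg_distrib]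
      _ = -∫ x, f x * advect u f x := by
          rw [← integral_finsetSum _ fun i _ => ((((hu i).mul hf).pd i).mul hf).integrable]
          simp only [hpointwise]
  linarith

lemma integral_mul_scalarCurl {w : EuclideanSpace ℝ (Fin 2) → ℝ}
    {F : Fin 2 → EuclideanSpace ℝ (Fin 2) → ℝ} (hw : IsSchwartz w) (hF : ∀ j, IsSchwartz (F j)) :
    ∫ x, w x * scalarCurl F x = ∫ x, (pd 1 w x * F 0 x - pd 0 w x * F 1 x) := by
  simp only [scalarCurl, mul_sub]
  rw [integral_sub (hw.mul ((hF 1).pd 0)).integrable (hw.mul ((hF 0).pd 1)).integrable,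
    integral_sub ((hw.pd 1).mul (hF 0)).integrable ((hw.pd 0).mul (hF 1)).integrable,
    hw.integral_mul_pd (hF 1), hw.integral_mul_pd (hF 0)]
  ring

end IsSchwartz

/-- Testing the vorticity equation `∂ₜω = Δω − (u·∇)ω − curl F` against `ω`. -/
lemma enstrophy_balance {w w' : EuclideanSpace ℝ (Fin 2) → ℝ}
    {u F : Fin 2 → EuclideanSpace ℝ (Fin 2) → ℝ} (hw : IsSchwartz w) (hu : ∀ j, IsSchwartz (u j))
    (hF : ∀ j, IsSchwartz (F j)) (divfree : ∀ x, divergence u x = 0)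
    (hw' : ∀ x, w' x = lap w x - advect u w x - scalarCurl F x) :
    (∫ x, w x * w' x) + ∑ i, ∫ x, pd i w x ^ 2
      = ∫ x, (pd 0 w x * F 1 x - pd 1 w x * F 0 x) := by
  have hlap : IsSchwartz fun x => w x * lap w x := hw.mul (.lap_of_pd hw.pd)
  have hadvect : IsSchwartz fun x => w x * advect u w x := hw.mul (.advect hu hw)
  have hcurl : IsSchwartz fun x => w x * scalarCurl F x := hw.mul (.scalarCurl hF)
  simp only [hw', mul_sub]
  rw [integral_sub (hlap.sub hadvect).integrable hcurl.integrable,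
    integral_sub hlap.integrable hadvect.integrable, hw.integral_mul_lap_self,
    hw.integral_mul_advect_self hu divfree, hw.integral_mul_scalarCurl hF,
    integral_sub ((hw.pd 1).mul (hF 0)).integrable ((hw.pd 0).mul (hF 1)).integrable,
    integral_sub ((hw.pd 0).mul (hF 1)).integrable ((hw.pd 1).mul (hF 0)).integrable]
  ring

end Schwartz

section SchwartzFamily

variable {n : ℕ} {T t : ℝ} {f g : ℝ → EuclideanSpace ℝ (Fin n) → ℝ}

namespace SchwartzFamily

lemma isSchwartz (hf : SchwartzFamily T f) (ht : t ∈ Set.Ioo 0 T) (hsmooth : ContDiff ℝ ∞ (f t)) :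
    IsSchwartz (f t) := by
  refine ⟨⟨f t, hsmooth, fun k l => ?_⟩, rfl⟩
  obtain ⟨ε, hε, C, hC⟩ := hf t ht k l
  exact ⟨C, hC t ht (by simpa using hε)⟩

protected lemma sub (hf : SchwartzFamily T f) (hg : SchwartzFamily T g)
    (hf' : ∀ t, ContDiff ℝ ∞ (f t)) (hg' : ∀ t, ContDiff ℝ ∞ (g t)) :
    SchwartzFamily T fun t x => f t x - g t x := by
  intro t₀ ht₀ k l
  obtain ⟨ε₁, hε₁, C₁, hC₁⟩ := hf t₀ ht₀ k l
  obtain ⟨ε₂, hε₂, C₂, hC₂⟩ := hg t₀ ht₀ k l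
  refine ⟨min ε₁ ε₂, lt_min hε₁ hε₂, C₁ + C₂, fun t ht htt₀ x => ?_⟩
  have hl : ((l : ℕ∞) : ℕ∞ω) ≤ ∞ := ENat.LEInfty.out
  have hsub : iteratedFDeriv ℝ l (fun y => f t y - g t y) x
      = iteratedFDeriv ℝ l (f t) x - iteratedFDeriv ℝ l (g t) x :=
    iteratedFDeriv_sub_apply ((hf' t).of_le hl).contDiffAt ((hg' t).of_le hl).contDiffAt
  calc ‖x‖ ^ k * ‖iteratedFDeriv ℝ l (fun y => f t y - g t y) x‖
      ≤ ‖x‖ ^ k * (‖iteratedFDeriv ℝ l (f t) x‖ + ‖iteratedFDeriv ℝ l (g t) x‖) := by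
        rw [hsub]
        gcongr
        exact norm_sub_le _ _
    _ ≤ C₁ + C₂ := by
        rw [mul_add]
        exact add_le_add (hC₁ t ht (lt_min_iff.1 htt₀).1 x) (hC₂ t ht (lt_min_iff.1 htt₀).2 x)

protected lemma pd (hf : SchwartzFamily T f) (hsmooth : ∀ t, ContDiff ℝ ∞ (f t)) (i : Fin n) :
    SchwartzFamily T fun t => pd i (f t) := by
  intro t₀ ht₀ k l
  obtain ⟨ε, hε, C, hC⟩ := hf t₀ ht₀ k (l + 1)
  refine ⟨ε, hε, C, fun t ht htt₀ x => (mul_le_mul_of_nonneg_left ?_ (by positivity)).trans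
    (hC t ht htt₀ x)⟩
  have hfderiv : ContDiff ℝ ∞ (fderiv ℝ (f t)) := (hsmooth t).fderiv_right (by simp)
  calc ‖iteratedFDeriv ℝ l (pd i (f t)) x‖
      ≤ ‖EuclideanSpace.single i (1 : ℝ)‖ * ‖iteratedFDeriv ℝ l (fderiv ℝ (f t)) x‖ :=
        norm_iteratedFDeriv_clm_apply_const hfderiv.contDiffAt ENat.LEInfty.out
    _ = ‖iteratedFDeriv ℝ (l + 1) (f t) x‖ := by simp [norm_iteratedFDeriv_fderiv]

lemma exists_abs_le (hf : SchwartzFamily T f) (ht : t ∈ Set.Ioo 0 T) :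
    ∃ C, ∀ᶠ s in nhds t, ∀ x, |f s x| ≤ C := by
  obtain ⟨ε, hε, C, hC⟩ := hf t ht 0 0
  refine ⟨C, ?_⟩
  filter_upwards [isOpen_Ioo.mem_nhds ht, Metric.ball_mem_nhds t hε] with s hs hst x
  simpa using hC s hs hst x

lemma exists_abs_le_one_add_norm_rpow (hf : SchwartzFamily T f) (ht : t ∈ Set.Ioo 0 T) (m : ℕ) :
    ∃ C, ∀ᶠ s in nhds t, ∀ x, |f s x| ≤ C * (1 + ‖x‖) ^ (-(m : ℝ)) := by
  obtain ⟨ε₁, hε₁, C₁, hC₁⟩ := hf t ht 0 0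
  obtain ⟨ε₂, hε₂, C₂, hC₂⟩ := hf t ht m 0
  refine ⟨2 ^ m * (C₁ + C₂), ?_⟩
  filter_upwards [isOpen_Ioo.mem_nhds ht, Metric.ball_mem_nhds t hε₁, Metric.ball_mem_nhds t hε₂]
    with s hs hs₁ hs₂ x
  simpa using pow_mul_le_of_le_of_pow_mul_le (k := 0) (l := m) (norm_nonneg x) (abs_nonneg (f s x))
    (by simpa using hC₁ s hs hs₁ x) (by simpa using hC₂ s hs hs₂ x)

end SchwartzFamily

lemma hasDerivAt_half_integral_sq (hf : ContDiff ℝ ∞ (Function.uncurry f))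
    (hdecay : SchwartzFamily T f)
    (hdecay' : SchwartzFamily T fun t x => deriv (fun s => f s x) t) (ht : t ∈ Set.Ioo 0 T) :
    HasDerivAt (fun s => 1 / 2 * ∫ x, f s x ^ 2) (∫ x, f t x * deriv (fun s => f s x) t) t := by
  obtain ⟨C, hC⟩ := hdecay.exists_abs_le ht
  obtain ⟨C', hC'⟩ := hdecay'.exists_abs_le_one_add_norm_rpow ht (n + 1)
  have hderiv (s : ℝ) (x : EuclideanSpace ℝ (Fin n)) :
      HasDerivAt (fun s => f s x ^ 2) (2 * (f s x * deriv (fun s => f s x) s)) s := by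
    have hfs := (hasDerivAt_time (hf.differentiable (by simp) (s, x))).differentiableAt.hasDerivAt
    simpa [mul_assoc] using hfs.fun_pow 2
  have hbound : ∀ᶠ s in nhds t, ∀ x, ‖2 * (f s x * deriv (fun s => f s x) s)‖
      ≤ 2 * (C * (C' * (1 + ‖x‖) ^ (-((n + 1 : ℕ) : ℝ)))) := by
    filter_upwards [hC, hC'] with s hs hs' x
    rw [norm_mul, norm_mul, Real.norm_ofNat, Real.norm_eq_abs, Real.norm_eq_abs]
    gcongr
    exacts [(abs_nonneg _).trans (hs x), hs x, hs' x]
  have hbound_integrable : Integrable fun x : EuclideanSpace ℝ (Fin n) =>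
      2 * (C * (C' * (1 + ‖x‖) ^ (-((n + 1 : ℕ) : ℝ)))) :=
    (((integrable_one_add_norm (by simp)).const_mul C').const_mul C).const_mul 2
  have hint : HasDerivAt (fun s => ∫ x, f s x ^ 2)
      (∫ x, 2 * (f t x * deriv (fun s => f s x) t)) t :=
    (hasDerivAt_integral_of_dominated_loc_of_deriv_le hbound
      (.of_forall fun s => ((contDiff_slice hf s).continuous.pow 2).aestronglyMeasurable)
      (hdecay.isSchwartz ht (contDiff_slice hf t)).sq.integrable
      (((contDiff_slice hf t).continuous.mul
        (contDiff_slice (contDiff_uncurry_deriv hf) t).continuous).const_mul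
          2).aestronglyMeasurable
      (Filter.Eventually.of_forall fun x s hs => hs x) hbound_integrable
      (.of_forall fun x s _ => hderiv s x)).2
  refine (hint.const_mul (1 / 2)).congr_deriv ?_
  rw [integral_const_mul]
  ring

end SchwartzFamily

section CauchySchwarz

variable {α : Type*} [MeasurableSpace α] {μ : Measure α} {f g : α → ℝ}

lemma memLp_two_sqrt (hf : Integrable f μ) (hf₀ : 0 ≤ f) : MemLp (fun x => √(f x)) 2 μ := by
  refine (memLp_two_iff_integrable_sq
    (continuous_sqrt.comp_aestronglyMeasurable hf.aestronglyMeasurable)).2 ?_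
  simpa only [sq_sqrt (hf₀ _)] using hf

lemma integral_sqrt_mul_sqrt_le (hf : Integrable f μ) (hg : Integrable g μ) (hf₀ : 0 ≤ f)
    (hg₀ : 0 ≤ g) :
    ∫ x, √(f x) * √(g x) ∂μ ≤ √(∫ x, f x ∂μ) * √(∫ x, g x ∂μ) := by
  have hholder := integral_mul_le_Lp_mul_Lq_of_nonneg HolderConjugate.two_two
    (.of_forall fun x => sqrt_nonneg (f x)) (.of_forall fun x => sqrt_nonneg (g x))
    (by simpa using memLp_two_sqrt hf hf₀) (by simpa using memLp_two_sqrt hg hg₀)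
  simpa only [rpow_two, sq_sqrt (hf₀ _), sq_sqrt (hg₀ _), ← sqrt_eq_rpow] using hholder

variable {ι : Type*} [Fintype ι] {n : ℕ}

lemma sum_directorForce_sq_le (d : ι → EuclideanSpace ℝ (Fin n) → ℝ)
    (x : EuclideanSpace ℝ (Fin n)) :
    ∑ j, directorForce d j x ^ 2 ≤ gradSq d x * ∑ k, lap (d k) x ^ 2 := by
  calc ∑ j, directorForce d j x ^ 2
      ≤ ∑ j, (∑ k, lap (d k) x ^ 2) * ∑ k, pd j (d k) x ^ 2 :=
        Finset.sum_le_sum fun j _ => Finset.sum_mul_sq_le_sq_mul_sq _ _ _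
    _ = gradSq d x * ∑ k, lap (d k) x ^ 2 := by rw [← Finset.mul_sum, mul_comm, gradSq]

lemma pd_mul_directorForce_sub_le (w : EuclideanSpace ℝ (Fin 2) → ℝ)
    (d : ι → EuclideanSpace ℝ (Fin 2) → ℝ) (x : EuclideanSpace ℝ (Fin 2)) :
    pd 0 w x * directorForce d 1 x - pd 1 w x * directorForce d 0 x
      ≤ √(gradSq d x) * (√(∑ k, lap (d k) x ^ 2) * √(∑ i, pd i w x ^ 2)) := by
  have hgradSq : 0 ≤ gradSq d x := by unfold gradSq; positivity
  rw [← sqrt_mul (by positivity), ← sqrt_mul hgradSq, ← mul_assoc]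
  refine le_sqrt_of_sq_le ?_
  calc (pd 0 w x * directorForce d 1 x - pd 1 w x * directorForce d 0 x) ^ 2
      ≤ (∑ j, directorForce d j x ^ 2) * ∑ i, pd i w x ^ 2 := by
        simp only [Fin.sum_univ_two]
        nlinarith [sq_nonneg (pd 0 w x * directorForce d 0 x + pd 1 w x * directorForce d 1 x)]
    _ ≤ (gradSq d x * ∑ k, lap (d k) x ^ 2) * ∑ i, pd i w x ^ 2 := by
        gcongr
        exact sum_directorForce_sq_le d x

lemma ae_sqrt_gradSq_le_essSup {d : ι → EuclideanSpace ℝ (Fin n) → ℝ}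
    (hd : ∀ i k, IsSchwartz (pd i (d k))) :
    ∀ᵐ x, √(gradSq d x) ≤ essSup (fun x => √(gradSq d x)) volume := by
  obtain ⟨C, hC⟩ := (IsSchwartz.gradSq hd).exists_abs_le
  exact ae_le_essSup <| Filter.isBoundedUnder_of
    ⟨√C, fun x => sqrt_le_sqrt ((le_abs_self _).trans (hC x))⟩

lemma integral_pd_mul_directorForce_sub_le {w : EuclideanSpace ℝ (Fin 2) → ℝ}
    {d : ι → EuclideanSpace ℝ (Fin 2) → ℝ} (hw : IsSchwartz w)
    (hd : ∀ i k, IsSchwartz (pd i (d k))) :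
    ∫ x, (pd 0 w x * directorForce d 1 x - pd 1 w x * directorForce d 0 x)
      ≤ essSup (fun x => √(gradSq d x)) volume
        * √(∑ k, ∫ x, lap (d k) x ^ 2) * √(∑ i, ∫ x, pd i w x ^ 2) := by
  have hlapSq : Integrable fun x => ∑ k, lap (d k) x ^ 2 :=
    (IsSchwartz.sum fun k => (IsSchwartz.lap_of_pd fun i => hd i k).sq).integrable
  have hpdSq : Integrable fun x => ∑ i, pd i w x ^ 2 :=
    (IsSchwartz.sum fun i => (hw.pd i).sq).integrable
  have hforce (j : Fin 2) : IsSchwartz (directorForce d j) := .directorForce hd j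
  have hlapSq₀ : 0 ≤ fun x => ∑ k, lap (d k) x ^ 2 := fun x => by positivity
  have hpdSq₀ : 0 ≤ fun x => ∑ i, pd i w x ^ 2 := fun x => by positivity
  have hess := ae_sqrt_gradSq_le_essSup hd
  obtain ⟨x₀, hx₀⟩ := hess.exists
  have hess₀ : 0 ≤ essSup (fun x => √(gradSq d x)) volume := (sqrt_nonneg _).trans hx₀
  calc ∫ x, (pd 0 w x * directorForce d 1 x - pd 1 w x * directorForce d 0 x)
      ≤ ∫ x, essSup (fun x => √(gradSq d x)) volume
          * (√(∑ k, lap (d k) x ^ 2) * √(∑ i, pd i w x ^ 2)) := by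
        refine integral_mono_ae
          (((hw.pd 0).mul (hforce 1)).sub ((hw.pd 1).mul (hforce 0))).integrable
          (((memLp_two_sqrt hlapSq hlapSq₀).integrable_mul
            (memLp_two_sqrt hpdSq hpdSq₀)).const_mul _) ?_
        filter_upwards [hess] with x hx
        exact (pd_mul_directorForce_sub_le w d x).trans (by gcongr)
    _ ≤ essSup (fun x => √(gradSq d x)) volume
          * (√(∫ x, ∑ k, lap (d k) x ^ 2) * √(∫ x, ∑ i, pd i w x ^ 2)) := by
        rw [integral_const_mul]
        gcongr
        exact integral_sqrt_mul_sqrt_le hlapSq hpdSq hlapSq₀ hpdSq₀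
    _ = essSup (fun x => √(gradSq d x)) volume
          * √(∑ k, ∫ x, lap (d k) x ^ 2) * √(∑ i, ∫ x, pd i w x ^ 2) := by
        rw [integral_finsetSum _ fun k _ => (IsSchwartz.lap_of_pd fun i => hd i k).sq.integrable,
          integral_finsetSum _ fun i _ => (hw.pd i).sq.integrable, mul_assoc]

end CauchySchwarz

section Vorticity

lemma vort2_eq_scalarCurl (v : EuclideanSpace ℝ (Fin 2) → EuclideanSpace ℝ (Fin 2)) :
    vort2 v = scalarCurl fun j x => v x j :=
  rfl

variable {T t : ℝ} {u : ℝ → Fin 2 → EuclideanSpace ℝ (Fin 2) → ℝ}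

lemma contDiff_uncurry_scalarCurl
    (hu : ∀ j, ContDiff ℝ ∞ (Function.uncurry fun s => u s j)) :
    ContDiff ℝ ∞ (Function.uncurry fun s => scalarCurl (u s)) :=
  (contDiff_uncurry_pd (hu 1) 0).sub (contDiff_uncurry_pd (hu 0) 1)

protected lemma SchwartzFamily.scalarCurl (hdecay : ∀ j, SchwartzFamily T fun s => u s j)
    (hu : ∀ j s, ContDiff ℝ ∞ (u s j)) : SchwartzFamily T fun s => scalarCurl (u s) :=
  ((hdecay 1).pd (hu 1) 0).sub ((hdecay 0).pd (hu 0) 1)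
    (fun s => contDiff_pd (hu 1 s) (by simp) 0) (fun s => contDiff_pd (hu 0 s) (by simp) 1)

lemma deriv_scalarCurl (hu : ∀ j, ContDiff ℝ ∞ (Function.uncurry fun s => u s j)) (s : ℝ)
    (x : EuclideanSpace ℝ (Fin 2)) :
    deriv (fun r => scalarCurl (u r) x) s
      = scalarCurl (fun j y => deriv (fun r => u r j y) s) x := by
  have hpd (i j : Fin 2) : DifferentiableAt ℝ (fun r => pd i (u r j) x) s :=
    (hasDerivAt_time
      ((contDiff_uncurry_pd (hu j) i).differentiable (by simp) (s, x))).differentiableAt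
  have hu₂ (j : Fin 2) : ContDiff ℝ 2 (Function.uncurry fun s => u s j) :=
    (hu j).of_le ENat.LEInfty.out
  simp only [scalarCurl]
  rw [deriv_fun_sub (hpd 0 1) (hpd 1 0), deriv_pd_comm (hu₂ 1), deriv_pd_comm (hu₂ 0)]

lemma hasDerivAt_half_integral_scalarCurl_sq
    (hu : ∀ j, ContDiff ℝ ∞ (Function.uncurry fun s => u s j))
    (hdecay : ∀ j, SchwartzFamily T fun s => u s j)
    (hdecay' : ∀ j, SchwartzFamily T fun s x => deriv (fun r => u r j x) s)
    (ht : t ∈ Set.Ioo 0 T) :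
    HasDerivAt (fun s => 1 / 2 * ∫ x, scalarCurl (u s) x ^ 2)
      (∫ x, scalarCurl (u t) x * scalarCurl (fun j y => deriv (fun s => u s j y) t) x) t := by
  have hcurl' : SchwartzFamily T fun s x => deriv (fun r => scalarCurl (u r) x) s := by
    simp only [deriv_scalarCurl hu]
    exact SchwartzFamily.scalarCurl hdecay'
      fun j s => contDiff_slice (contDiff_uncurry_deriv (hu j)) s
  simpa only [deriv_scalarCurl hu] using hasDerivAt_half_integral_sq
    (contDiff_uncurry_scalarCurl hu)
    (SchwartzFamily.scalarCurl hdecay fun j s => contDiff_slice (hu j) s) hcurl' ht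

end Vorticity

theorem statement16_general {ι : Type*} [Fintype ι] {T t : ℝ} (ht : t ∈ Set.Ioo 0 T)
    {u : ℝ → EuclideanSpace ℝ (Fin 2) → EuclideanSpace ℝ (Fin 2)}
    {P : EuclideanSpace ℝ (Fin 2) → ℝ} {d : ι → EuclideanSpace ℝ (Fin 2) → ℝ}
    (hu : ContDiff ℝ ∞ (Function.uncurry u)) (hP : ContDiff ℝ 2 P) (hd : ∀ k, ContDiff ℝ 3 (d k))
    (hu_decay : ∀ j, SchwartzFamily T fun s x => u s x j)
    (hu_decay' : ∀ j, SchwartzFamily T fun s x => deriv (fun r => u r x j) s)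
    (hd_decay : ∀ i k, IsSchwartz (pd i (d k)))
    (momentum : ∀ j x, deriv (fun s => u s x j) t - lap (fun y => u t y j) x
        + (∑ i, u t x i * pd i (fun y => u t y j) x) + pd j P x
      = -∑ i, pd i (fun y => ∑ k, pd i (d k) y * pd j (d k) y) x)
    (divfree : ∀ x, ∑ i, pd i (fun y => u t y i) x = 0) :
    ∃ D : ℝ, HasDerivAt (fun s => 1 / 2 * ∫ x, vort2 (u s) x ^ 2) D t ∧
      D + ∑ i, ∫ x, pd i (vort2 (u t)) x ^ 2
        ≤ essSup (fun x => √(gradSq d x)) volume * √(∑ k, ∫ x, lap (d k) x ^ 2)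
          * gradVort2L2 (u t) := by
  have hcomp (j : Fin 2) : ContDiff ℝ ∞ (Function.uncurry fun s x => u s x j) :=
    contDiff_euclidean.1 hu j
  have hut (j : Fin 2) : IsSchwartz fun x => u t x j :=
    (hu_decay j).isSchwartz ht (contDiff_slice (hcomp j) t)
  have hcurl := IsSchwartz.scalarCurl hut
  have hvort := vorticity_equation (fun j => (hut j).contDiff.of_le ENat.LEInfty.out) hP hd
    momentum divfree
  simp only [gradVort2L2, vort2_eq_scalarCurl]
  refine ⟨_, hasDerivAt_half_integral_scalarCurl_sq (u := fun s j x => u s x j) hcomp hu_decay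
    hu_decay' ht, ?_⟩
  rw [enstrophy_balance hcurl hut (.directorForce hd_decay) divfree hvort]
  exact integral_pd_mul_directorForce_sub_le hcurl hd_decay

/-- In 2D: (d/dt)½‖ω‖² + ‖∇ω‖² ≤ C‖∇d‖_{L^∞}‖Δd‖_{L²}‖∇ω‖_{L²}. -/
theorem statement16 :
    ∃ C : ℝ, 0 < C ∧
      ∀ (T : ℝ) (u : ℝ → EuclideanSpace ℝ (Fin 2) → EuclideanSpace ℝ (Fin 2))
        (P : ℝ → EuclideanSpace ℝ (Fin 2) → ℝ)
        (d : ℝ → EuclideanSpace ℝ (Fin 2) → EuclideanSpace ℝ (Fin 3)),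
        IsNLC 2 T u P d → SchwartzDecay 2 T u d →
        ∀ t ∈ Set.Ioo (0:ℝ) T, ∃ D : ℝ,
          HasDerivAt (fun s => (1/2 : ℝ) * ∫ x, (vort2 (u s) x) ^ 2) D t ∧
          D + ∑ i, ∫ x, (pd i (vort2 (u t)) x) ^ 2
            ≤ C * gradLinf (d t) * lapL2 (d t) * gradVort2L2 (u t) := by
  refine ⟨1, one_pos, fun T u P d hN hS t ht => ?_⟩
  have hP : ContDiff ℝ ∞ (P t) := contDiff_slice hN.smooth_P t
  have hd (k : Fin 3) : ContDiff ℝ ∞ (fun x => d t x k) :=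
    contDiff_slice (f := fun s x => d s x k) (contDiff_euclidean.1 hN.smooth_d k) t
  rw [one_mul]
  exact statement16_general (d := fun k x => d t x k) ht hN.smooth_u
    (hP.of_le ENat.LEInfty.out) (fun k => (hd k).of_le ENat.LEInfty.out)
    hS.1 hS.2.1 (fun i k => (hS.2.2.1 i k).isSchwartz ht (contDiff_pd (hd k) (by simp) i))
    (fun j x => hN.momentum t ht x j) (hN.divfree t ht)
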